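/- arXiv:1203.1294 — 2 statements merged into one kernel-verified Lean document; each statement's English description precedes it below -/
import Mathlib

section
/- Let R → S be a flat ring homomorphism of commutative Noetherian local rings (not necessarily local as a homomorphism), let X be a subcategory of mod R closed under finite direct sums, and let φ: X → M be a right X-approximation of a finitely generated R-module M. Then φ ⊗_R S : X ⊗_R S → M ⊗_R S is a right add_S(X ⊗_R S)-approximation, where X ⊗_R S denotes the subcategory of mod S of modules of the form X' ⊗_R S with X' ∈ X. -/
/-!
For `X'` finitely presented and `S` flat over `R`, the canonical map
`S ⊗ Hom_R(X', M) → Hom_S(S ⊗ X', S ⊗ M)` is an isomorphism, so every `S`-linear map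
`S ⊗ X' → S ⊗ M` is an `S`-linear combination of base changes of `R`-linear maps `X' → M`. When
`X' ∈ 𝒳` each of these lifts through `φ`, hence so does the combination
(`exists_lift_baseChange`). Being able to lift every map to `S ⊗ M` passes to finite direct sums,
componentwise, and to direct summands, by composing with the inclusion and the projection; this
covers all of `add_S (𝒳 ⊗ S)`.
-/

open TensorProduct

noncomputable section

/-- The nonfree locus of a module: primes where the localization is a nonfree module. -/
def nonfreeLocus (R : Type) [CommRing R] (M : Type) [AddCommGroup M] [Module R M] :
    Set (PrimeSpectrum R) :=
  {p | ¬ Module.Free (Localization.AtPrime p.asIdeal) (LocalizedModule p.asIdeal.primeCompl M)}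

/-- The nonfree locus of a subcategory of `mod R`. -/
def catNonfreeLocus (R : Type) [CommRing R] (𝒳 : Set (ModuleCat.{0} R)) :
    Set (PrimeSpectrum R) :=
  ⋃ M ∈ 𝒳, nonfreeLocus R M

/-- A resolving subcategory of the category of finitely generated `R`-modules:
closed under isomorphism, consisting of finitely generated modules, containing `R`,
closed under direct summands, extensions and kernels of epimorphisms. -/
structure IsResolving (R : Type) [CommRing R] (𝒳 : Set (ModuleCat.{0} R)) : Prop where
  fg : ∀ M ∈ 𝒳, Module.Finite R M
  mem_of_iso : ∀ M N : ModuleCat.{0} R, Nonempty (M ≃ₗ[R] N) → M ∈ 𝒳 → N ∈ 𝒳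
  ring_mem : ModuleCat.of R R ∈ 𝒳
  summand_mem : ∀ M N : ModuleCat.{0} R,
    (∃ (i : N →ₗ[R] M) (p : M →ₗ[R] N), p ∘ₗ i = LinearMap.id) → M ∈ 𝒳 → N ∈ 𝒳
  extension_mem : ∀ (L M N : ModuleCat.{0} R) (f : L →ₗ[R] M) (g : M →ₗ[R] N),
    Function.Injective f → Function.Surjective g → Function.Exact f g →
      L ∈ 𝒳 → N ∈ 𝒳 → M ∈ 𝒳
  ker_epi_mem : ∀ (L M N : ModuleCat.{0} R) (f : L →ₗ[R] M) (g : M →ₗ[R] N),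
    Function.Injective f → Function.Surjective g → Function.Exact f g →
      M ∈ 𝒳 → N ∈ 𝒳 → L ∈ 𝒳

/-- Membership in the additive closure `add 𝒴` of a subcategory `𝒴` of `mod S`:
direct summands of finite direct sums of modules in `𝒴`. -/
def memAdd (S : Type) [CommRing S] (𝒴 : Set (ModuleCat.{0} S)) (N : Type)
    [AddCommGroup N] [Module S N] : Prop :=
  ∃ (n : ℕ) (Y : Fin n → ModuleCat.{0} S), (∀ i, Y i ∈ 𝒴) ∧
    ∃ (s : N →ₗ[S] ((i : Fin n) → Y i)) (r : ((i : Fin n) → Y i) →ₗ[S] N),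
      r ∘ₗ s = LinearMap.id

/-- The subcategory `𝒳_p` of `mod R_p` consisting of localizations of modules in `𝒳`. -/
def locCat (R : Type) [CommRing R] (𝒳 : Set (ModuleCat.{0} R)) (p : PrimeSpectrum R) :
    Set (ModuleCat.{0} (Localization.AtPrime p.asIdeal)) :=
  {N | ∃ X ∈ 𝒳, Nonempty
    (N ≃ₗ[Localization.AtPrime p.asIdeal] LocalizedModule p.asIdeal.primeCompl X)}

/-- `κ(p) ∈ add_{R_p} 𝒳_p`. -/
def kappaMemAdd (R : Type) [CommRing R] (𝒳 : Set (ModuleCat.{0} R)) (p : PrimeSpectrum R) :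
    Prop :=
  memAdd (Localization.AtPrime p.asIdeal) (locCat R 𝒳 p)
    (IsLocalRing.ResidueField (Localization.AtPrime p.asIdeal))

/-- A specialization-closed subset of `Spec R`. -/
def SpecClosed (R : Type) [CommRing R] (Φ : Set (PrimeSpectrum R)) : Prop :=
  ∀ p ∈ Φ, ∀ q : PrimeSpectrum R, p.asIdeal ≤ q.asIdeal → q ∈ Φ

/-- `s(R)`: the set of primes `p` such that `R_p` is not a field. -/
def nonFieldLocus (R : Type) [CommRing R] : Set (PrimeSpectrum R) :=
  {p | ¬ IsField (Localization.AtPrime p.asIdeal)}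

/-- A (Noetherian) local ring is regular iff its maximal ideal is generated by
`dim` many elements. -/
def IsRegularLoc (A : Type) [CommRing A] [IsLocalRing A] : Prop :=
  ∃ (n : ℕ) (x : Fin n → A), ringKrullDim A = (n : ℕ) ∧
    Ideal.span (Set.range x) = IsLocalRing.maximalIdeal A

/-- The singular locus of `R`. -/
def singLocus (R : Type) [CommRing R] : Set (PrimeSpectrum R) :=
  {p | ¬ IsRegularLoc (Localization.AtPrime p.asIdeal)}

/-- `V^{-1}(Φ)`: finitely generated modules whose nonfree locus is contained in `Φ`. -/
def Vinv (R : Type) [CommRing R] (Φ : Set (PrimeSpectrum R)) : Set (ModuleCat.{0} R) :=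
  {M | Module.Finite R M ∧ nonfreeLocus R M ⊆ Φ}

/-- The depth of a module: supremum of lengths of regular sequences in the maximal ideal. -/
def seqDepth (R : Type) [CommRing R] [IsLocalRing R] (M : Type) [AddCommGroup M]
    [Module R M] : ℕ∞ :=
  sSup {n : ℕ∞ | ∃ rs : List R, (rs.length : ℕ∞) = n ∧
    (∀ r ∈ rs, r ∈ IsLocalRing.maximalIdeal R) ∧ RingTheory.Sequence.IsRegular M rs}

/-- A local ring is Cohen–Macaulay if its depth equals its Krull dimension. -/
def IsCMLocalRing (R : Type) [CommRing R] [IsLocalRing R] : Prop :=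
  (seqDepth R R : WithBot ℕ∞) = ringKrullDim R

/-- A module over a local ring is Cohen–Macaulay ("maximal Cohen–Macaulay") if its depth
equals the Krull dimension of the ring. -/
def IsCMModule (R : Type) [CommRing R] [IsLocalRing R] (M : Type) [AddCommGroup M]
    [Module R M] : Prop :=
  (seqDepth R M : WithBot ℕ∞) = ringKrullDim R

/-- The subcategory `CM(R)` of `mod R` of (maximal) Cohen–Macaulay modules. -/
def CMcat (R : Type) [CommRing R] [IsLocalRing R] : Set (ModuleCat.{0} R) :=
  {M | Module.Finite R M ∧ IsCMModule R M}

/-- `V_CM^{-1}(Φ)`: Cohen–Macaulay modules whose nonfree locus is contained in `Φ`. -/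
def VinvCM (R : Type) [CommRing R] [IsLocalRing R] (Φ : Set (PrimeSpectrum R)) :
    Set (ModuleCat.{0} R) :=
  {M | Module.Finite R M ∧ IsCMModule R M ∧ nonfreeLocus R M ⊆ Φ}

/-- `IsSyzygyOf R n M S` : `S` is an `n`-th syzygy of `M` in a minimal free resolution,
i.e. `S ≅ Ω^n M`. -/
def IsSyzygyOf (R : Type) [CommRing R] [IsLocalRing R] :
    ℕ → ModuleCat.{0} R → ModuleCat.{0} R → Prop
  | 0, M, S => Nonempty (S ≃ₗ[R] M)
  | n + 1, M, S => ∃ (m : ℕ) (π : (Fin m → R) →ₗ[R] M), Function.Surjective π ∧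
      LinearMap.ker π ≤ (IsLocalRing.maximalIdeal R) • (⊤ : Submodule R (Fin m → R)) ∧
      IsSyzygyOf R n (ModuleCat.of R (LinearMap.ker π)) S

/-- `IsTransposeOf R X M T` : `T` is (isomorphic to) the transpose `tr_X M` of `M`
with respect to `X`, computed from a minimal free presentation of `M`. -/
def IsTransposeOf (R : Type) [CommRing R] [IsLocalRing R] (X : Type) [AddCommGroup X]
    [Module R X] (M : Type) [AddCommGroup M] [Module R M] (T : Type) [AddCommGroup T]
    [Module R T] : Prop :=
  ∃ (n m : ℕ) (dl : (Fin n → R) →ₗ[R] (Fin m → R)) (π : (Fin m → R) →ₗ[R] M),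
    Function.Surjective π ∧ Function.Exact dl π ∧
    LinearMap.ker π ≤ (IsLocalRing.maximalIdeal R) • (⊤ : Submodule R (Fin m → R)) ∧
    LinearMap.ker dl ≤ (IsLocalRing.maximalIdeal R) • (⊤ : Submodule R (Fin n → R)) ∧
    Nonempty (T ≃ₗ[R]
      (((Fin n → R) →ₗ[R] X) ⧸ LinearMap.range (LinearMap.lcomp R X dl)))

/-- `𝒳` is closed under tensor products. -/
def ClosedUnderTensor (R : Type) [CommRing R] (𝒳 : Set (ModuleCat.{0} R)) : Prop :=
  ∀ X ∈ 𝒳, ∀ Y ∈ 𝒳, ModuleCat.of R (TensorProduct R X Y) ∈ 𝒳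

/-- `𝒳` is closed under (Auslander) transposes. -/
def ClosedUnderTranspose (R : Type) [CommRing R] [IsLocalRing R]
    (𝒳 : Set (ModuleCat.{0} R)) : Prop :=
  ∀ M ∈ 𝒳, ∀ T : ModuleCat.{0} R, IsTransposeOf R R M T → T ∈ 𝒳


/-- The subcategory `add R` of direct summands of finitely generated free modules. -/
def addRCat (R : Type) [CommRing R] : Set (ModuleCat.{0} R) :=
  {M | ∃ (n : ℕ) (i : M →ₗ[R] (Fin n → R)) (p : (Fin n → R) →ₗ[R] M),
    p ∘ₗ i = LinearMap.id}

/-- A thick subcategory of `CM(R)`: closed under isomorphisms and direct summands, and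
satisfying two-out-of-three for short exact sequences of Cohen-Macaulay modules. -/
structure IsThickCM (R : Type) [CommRing R] [IsLocalRing R]
    (𝒳 : Set (ModuleCat.{0} R)) : Prop where
  subset_cm : 𝒳 ⊆ CMcat R
  mem_of_iso : ∀ M N : ModuleCat.{0} R, Nonempty (M ≃ₗ[R] N) → M ∈ 𝒳 → N ∈ 𝒳
  summand_mem : ∀ M N : ModuleCat.{0} R,
    (∃ (i : N →ₗ[R] M) (p : M →ₗ[R] N), p ∘ₗ i = LinearMap.id) → M ∈ 𝒳 → N ∈ 𝒳
  two_of_three : ∀ (L M N : ModuleCat.{0} R), L ∈ CMcat R → M ∈ CMcat R → N ∈ CMcat R →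
    ∀ (f : L →ₗ[R] M) (g : M →ₗ[R] N),
      Function.Injective f → Function.Surjective g → Function.Exact f g →
        ((L ∈ 𝒳 → M ∈ 𝒳 → N ∈ 𝒳) ∧ (L ∈ 𝒳 → N ∈ 𝒳 → M ∈ 𝒳) ∧ (M ∈ 𝒳 → N ∈ 𝒳 → L ∈ 𝒳))

/-- A local ring with infinite residue field has minimal multiplicity iff the square of the
maximal ideal equals `Q * m` for a parameter ideal `Q = (x_1, …, x_d)` generated by
`d = dim` many elements of `m`. -/
def HasMinimalMultiplicity (A : Type) [CommRing A] [IsLocalRing A] : Prop :=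
  ∃ (n : ℕ) (x : Fin n → A), ringKrullDim A = (n : ℕ) ∧
    (∀ i, x i ∈ IsLocalRing.maximalIdeal A) ∧
    (IsLocalRing.maximalIdeal A) ^ 2 =
      Ideal.span (Set.range x) * IsLocalRing.maximalIdeal A

/-- If every `R`-linear map `X → M` lifts through `φ`, then every `S`-linear map
`S ⊗ X → S ⊗ M` lifts through `S ⊗ φ`, since such maps are generated over `S` by the
base-changed ones. -/
theorem exists_lift_baseChange {R S X X₀ M : Type} [CommRing R] [CommRing S] [Algebra R S]
    [Module.Flat R S] [AddCommGroup X] [Module R X] [Module.FinitePresentation R X]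
    [AddCommGroup X₀] [Module R X₀] [AddCommGroup M] [Module R M] (φ : X₀ →ₗ[R] M)
    (hφ : ∀ f : X →ₗ[R] M, ∃ g : X →ₗ[R] X₀, φ ∘ₗ g = f)
    (f : S ⊗[R] X →ₗ[S] S ⊗[R] M) :
    ∃ g : S ⊗[R] X →ₗ[S] S ⊗[R] X₀, φ.baseChange S ∘ₗ g = f := by
  refine (Module.FinitePresentation.isBaseChange_map R X M S).inductionOn f
    (fun f => ∃ g, φ.baseChange S ∘ₗ g = f) ?_ ?_ ?_ ?_
  · exact ⟨0, LinearMap.comp_zero _⟩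
  · intro f
    obtain ⟨g, rfl⟩ := hφ f
    exact ⟨g.baseChange S, (LinearMap.baseChange_comp _ _).symm⟩
  · rintro s _ ⟨g, rfl⟩
    exact ⟨s • g, LinearMap.comp_smul _ _ _⟩
  · rintro _ _ ⟨g, rfl⟩ ⟨g', rfl⟩
    exact ⟨g + g', LinearMap.comp_add _ _ _⟩

/-- Let `R → S` be a flat homomorphism of Noetherian local rings, `𝒳` a
subcategory of `mod R` closed under finite direct sums, and `φ : X₀ → M` a right
`𝒳`-approximation. Then `φ ⊗_R S` is a right `add_S (𝒳 ⊗_R S)`-approximation. -/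
theorem baseChange_rightApproximation
    (R S : Type) [CommRing R] [IsNoetherianRing R] [IsLocalRing R]
    [CommRing S] [IsNoetherianRing S] [IsLocalRing S]
    [Algebra R S] [Module.Flat R S]
    (𝒳 : Set (ModuleCat.{0} R)) (hfg : ∀ X ∈ 𝒳, Module.Finite R X)
    (hsum : ∀ X ∈ 𝒳, ∀ Y ∈ 𝒳, ModuleCat.of R (↥X × ↥Y) ∈ 𝒳)
    (X₀ : ModuleCat.{0} R) (hX₀ : X₀ ∈ 𝒳)
    (M : Type) [AddCommGroup M] [Module R M] [Module.Finite R M]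
    (φ : X₀ →ₗ[R] M)
    (happrox : ∀ X' ∈ 𝒳, ∀ f : ↥X' →ₗ[R] M, ∃ g : ↥X' →ₗ[R] ↥X₀, φ ∘ₗ g = f) :
    memAdd S {Y : ModuleCat.{0} S | ∃ X' ∈ 𝒳, Nonempty (Y ≃ₗ[S] S ⊗[R] ↥X')}
      (S ⊗[R] ↥X₀) ∧
    ∀ (N : Type) [AddCommGroup N] [Module S N],
      memAdd S {Y : ModuleCat.{0} S | ∃ X' ∈ 𝒳, Nonempty (Y ≃ₗ[S] S ⊗[R] ↥X')} N →
      ∀ f : N →ₗ[S] (S ⊗[R] M), ∃ g : N →ₗ[S] (S ⊗[R] ↥X₀),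
        (LinearMap.baseChange S φ) ∘ₗ g = f := by
  refine ⟨⟨1, fun _ => ModuleCat.of S (S ⊗[R] X₀), fun _ => ⟨X₀, hX₀, ⟨LinearEquiv.refl S _⟩⟩,
    LinearMap.pi fun _ => LinearMap.id, LinearMap.proj 0, rfl⟩, ?_⟩
  rintro N _ _ ⟨n, Y, hY, i, p, hpi⟩ f
  have hlift (k : Fin n) : ∃ g : Y k →ₗ[S] S ⊗[R] X₀,
      φ.baseChange S ∘ₗ g = f ∘ₗ p ∘ₗ LinearMap.single S (fun k => Y k) k := by
    obtain ⟨X', hX', ⟨e⟩⟩ := hY k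
    have := hfg X' hX'
    have : Module.FinitePresentation R X' := Module.finitePresentation_of_finite R X'
    obtain ⟨g, hg⟩ := exists_lift_baseChange φ (happrox X' hX')
      (f ∘ₗ p ∘ₗ LinearMap.single S (fun k => Y k) k ∘ₗ e.symm.toLinearMap)
    refine ⟨g ∘ₗ e.toLinearMap, ?_⟩
    rw [← LinearMap.comp_assoc, hg]
    ext y
    simp
  choose g hg using hlift
  have hsumlift : φ.baseChange S ∘ₗ LinearMap.lsum S (fun k => Y k) S g = f ∘ₗ p := by
    refine LinearMap.pi_ext' fun k => ?_
    have hk : LinearMap.lsum S (fun k => Y k) S g ∘ₗ LinearMap.single S (fun k => Y k) k = g k :=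
      LinearMap.ext fun y => LinearMap.lsum_piSingle (f := g) (i := k) (x := y) ..
    rw [LinearMap.comp_assoc, hk, hg, LinearMap.comp_assoc]
  refine ⟨LinearMap.lsum S (fun k => Y k) S g ∘ₗ i, ?_⟩
  rw [← LinearMap.comp_assoc, hsumlift, LinearMap.comp_assoc, hpi, LinearMap.comp_id]

end
end

section
/- Let R be a commutative Noetherian local ring with maximal ideal m, and let R̂ denote the m-adic completion of R. Let X be a resolving subcategory of mod R such that every module in X is locally free on the punctured spectrum of R (i.e., V(X) ⊆ {m}). Then add_{R̂}(X̂), the subcategory of mod R̂ consisting of direct summands of finite direct sums of completions X̂ = X ⊗_R R̂ of modules X ∈ X, is a resolving subcategory of mod R̂. -/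
/-!
Write `S` for the completion. As `𝒳` is closed under finite direct sums, `add 𝒳̂` consists of the
direct summands of the modules `S ⊗ X` with `X ∈ 𝒳` (`memAdd_iff_isSummandBaseChange`). Only
closure under extensions and under kernels of epimorphisms needs an argument.

*Extensions.* Adding complements reduces to extensions of `S ⊗ B` by `S ⊗ A` with `A, B ∈ 𝒳`
(`ExtensionsDescend.extension`). Choose `0 → K → F → B → 0` with `F` free. Such an extension is the
pushout along some `φ : S ⊗ K → S ⊗ A`, and `φ` matters only modulo maps extending to `S ⊗ F`. Since
`B` is locally free on the punctured spectrum, for some `n` every `a ∈ mⁿ` makes `a • id_B` factor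
through `F → B` (`exists_pow_factor`), so that `a • ψ` extends to `F` for each `ψ : K → A`. By
flatness `Hom(S ⊗ K, S ⊗ A) = S ⊗ Hom(K, A)`, and `S = R + mⁿS`; hence `φ` is congruent to the base
change of some `ψ : K → A` (`exists_descent_hom`), and the extension is the base change of the
pushout along `ψ`, which lies in `𝒳` (`exists_descent_extension`).

*Kernels.* For `0 → L → M → N → 0` and a free cover of `N` with kernel `Q`, the sum of `L` and the
cover is an extension of `M` by `Q`, and `Q` can be chosen in `add 𝒳̂`; so this case follows from
the previous one (`ExtensionsDescend.ker_epi`).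
-/

open TensorProduct

noncomputable section

/-! ### Descent of extensions along the completion -/

lemma exists_comp_eq_of_exact {S : Type} [CommRing S] {L M N Q : Type}
    [AddCommGroup L] [Module S L] [AddCommGroup M] [Module S M] [AddCommGroup N] [Module S N]
    [AddCommGroup Q] [Module S Q] (f : L →ₗ[S] M) (g : M →ₗ[S] N) (hf : Function.Injective f)
    (hfg : Function.Exact f g) (t : Q →ₗ[S] M) (ht : ∀ x, g (t x) = 0) :
    ∃ k : Q →ₗ[S] L, f ∘ₗ k = t := by
  let e := LinearEquiv.ofInjective f hf
  have hr : ∀ x, t x ∈ LinearMap.range f := fun x => (hfg _).1 (ht x)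
  refine ⟨e.symm.toLinearMap ∘ₗ t.codRestrict _ hr, ?_⟩
  refine LinearMap.ext fun x => ?_
  exact congrArg Subtype.val (e.apply_symm_apply (t.codRestrict _ hr x))

/-- If `B` is locally free on the punctured spectrum and `π : F → B` is onto, then a power of the
maximal ideal consists of elements `a` for which `a • id_B` factors through `π`. These elements
form an ideal, and localizing at `p ≠ m`, where `π` splits, shows that it is not inside `p`. -/
lemma exists_pow_factor {R : Type} [CommRing R] [IsNoetherianRing R] [IsLocalRing R]
    {F B : Type} [AddCommGroup F] [Module R F] [AddCommGroup B] [Module R B] [Module.Finite R B]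
    (π : F →ₗ[R] B) (hπ : Function.Surjective π)
    (h : nonfreeLocus R B ⊆ {IsLocalRing.closedPoint R}) :
    ∃ n : ℕ, ∀ a ∈ (IsLocalRing.maximalIdeal R) ^ n,
      ∃ σ : B →ₗ[R] F, π ∘ₗ σ = a • LinearMap.id := by
  let I : Ideal R :=
    { carrier := {a | ∃ σ : B →ₗ[R] F, π ∘ₗ σ = a • LinearMap.id}
      add_mem' := by
        rintro a b ⟨σ, hσ⟩ ⟨τ, hτ⟩
        exact ⟨σ + τ, by rw [LinearMap.comp_add, hσ, hτ, add_smul]⟩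
      zero_mem' := ⟨0, by simp⟩
      smul_mem' := by
        rintro c a ⟨σ, hσ⟩
        exact ⟨c • σ, by rw [LinearMap.comp_smul, hσ, smul_smul, smul_eq_mul]⟩ }
  have key : ∀ p : PrimeSpectrum R, p ≠ IsLocalRing.closedPoint R → ¬ I ≤ p.asIdeal := by
    intro p hp hle
    have hfree : Module.Free (Localization.AtPrime p.asIdeal)
        (LocalizedModule p.asIdeal.primeCompl B) := by
      by_contra hc
      exact hp (h hc)
    let T := p.asIdeal.primeCompl
    have hs : Function.Surjective (LocalizedModule.map T π) :=
      LocalizedModule.map_surjective T π hπ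
    obtain ⟨τ, hτ⟩ := Module.projective_lifting_property
      (LocalizedModule.map T π) LinearMap.id hs
    let jB := LocalizedModule.mkLinearMap T B
    let jF := LocalizedModule.mkLinearMap T F
    have := Module.finitePresentation_of_finite R B
    obtain ⟨σ, s, hσ⟩ := Module.FinitePresentation.exists_lift_of_isLocalizedModule T jF
      (τ.restrictScalars R ∘ₗ jB)
    have h1 : jB ∘ₗ (π ∘ₗ σ) = jB ∘ₗ ((s : R) • LinearMap.id) := by
      ext x
      have h2 : jF (σ x) = s • τ (jB x) := LinearMap.congr_fun hσ x
      have h3 : LocalizedModule.map T π (jF (σ x)) = jB (π (σ x)) := by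
        simp [jB, jF, LocalizedModule.map_mk, LocalizedModule.mkLinearMap_apply]
      have h4 : LocalizedModule.map T π (τ (jB x)) = jB x := LinearMap.congr_fun hτ (jB x)
      simp only [LinearMap.comp_apply, LinearMap.smul_apply, LinearMap.id_apply, map_smul]
      rw [← h3, h2, Submonoid.smul_def, LinearMap.map_smul_of_tower, h4]
    obtain ⟨t, ht⟩ := Module.Finite.exists_smul_of_comp_eq_of_isLocalizedModule T jB _ _ h1
    have hmem : (t : R) * s ∈ I := by
      refine ⟨(t : R) • σ, ?_⟩
      rw [LinearMap.comp_smul, mul_smul]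
      exact ht
    exact (t * s).2 (hle hmem)
  have hrad : IsLocalRing.maximalIdeal R ≤ I.radical := by
    rw [Ideal.radical_eq_sInf]
    refine le_sInf ?_
    rintro q ⟨hIq, hq⟩
    by_contra hne
    refine key ⟨q, hq⟩ ?_ hIq
    intro he
    exact hne (congrArg PrimeSpectrum.asIdeal he).ge
  obtain ⟨n, hn⟩ := Ideal.exists_pow_le_of_le_radical_of_fg hrad
    (IsNoetherian.noetherian (IsLocalRing.maximalIdeal R))
  exact ⟨n, fun a ha => hn ha⟩

/-- A linear map `S ⊗ K → S ⊗ A` comes from a map `K → A` up to maps extending along `ι`, as soon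
as `R` is dense in `S` modulo an ideal `J` that annihilates the maps `K → A` modulo those
extending along `ι`. In terms of a resolution of `B = coker ι`, this is the surjectivity of
`Ext¹(B, A) → Ext¹(S ⊗ B, S ⊗ A)`. -/
lemma exists_descent_hom {R S : Type} [CommRing R] [CommRing S] [Algebra R S] [Module.Flat R S]
    {K F A : Type} [AddCommGroup K] [Module R K] [AddCommGroup F] [Module R F]
    [AddCommGroup A] [Module R A] [Module.FinitePresentation R K]
    (ι : K →ₗ[R] F) (J : Ideal R)
    (hdense : ∀ s : S, ∃ r : R, s - algebraMap R S r ∈ J.map (algebraMap R S))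
    (hJ : ∀ a ∈ J, ∀ ψ : K →ₗ[R] A, ∃ θ : F →ₗ[R] A, θ ∘ₗ ι = a • ψ)
    (φ : S ⊗[R] K →ₗ[S] S ⊗[R] A) :
    ∃ (ψ : K →ₗ[R] A) (θ : S ⊗[R] F →ₗ[S] S ⊗[R] A),
      φ = ψ.baseChange S + θ ∘ₗ ι.baseChange S := by
  have small : ∀ ψ : K →ₗ[R] A, ∀ t ∈ J.map (algebraMap R S),
      ∃ θ : S ⊗[R] F →ₗ[S] S ⊗[R] A, t • ψ.baseChange S = θ ∘ₗ ι.baseChange S := by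
    intro ψ t ht
    induction ht using Submodule.span_induction with
    | mem x hx =>
      obtain ⟨a, ha, rfl⟩ := hx
      obtain ⟨θ, hθ⟩ := hJ a ha ψ
      refine ⟨θ.baseChange S, ?_⟩
      rw [← LinearMap.baseChange_comp, hθ, LinearMap.baseChange_smul]
      ext x
      simp
    | zero => exact ⟨0, by simp⟩
    | add x y _ _ hx hy =>
      obtain ⟨θ, hθ⟩ := hx
      obtain ⟨θ', hθ'⟩ := hy
      exact ⟨θ + θ', by rw [add_smul, hθ, hθ', LinearMap.add_comp]⟩
    | smul c x _ hx =>
      obtain ⟨θ, hθ⟩ := hx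
      exact ⟨c • θ, by rw [smul_eq_mul, mul_smul, hθ, LinearMap.smul_comp]⟩
  refine (Module.FinitePresentation.isBaseChange_map R K A S).inductionOn φ _ ?_ ?_ ?_ ?_
  · exact ⟨0, 0, by simp⟩
  · exact fun ψ => ⟨ψ, 0, by simp⟩
  · rintro s _ ⟨ψ, θ, rfl⟩
    obtain ⟨r, hr⟩ := hdense s
    obtain ⟨θ', hθ'⟩ := small ψ _ hr
    refine ⟨r • ψ, s • θ + θ', ?_⟩
    have e : (s - algebraMap R S r) • ψ.baseChange S
        = s • ψ.baseChange S - r • ψ.baseChange S := by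
      ext x
      simp [sub_smul]
    rw [LinearMap.add_comp, ← hθ', LinearMap.baseChange_smul, LinearMap.smul_comp, e, smul_add]
    abel
  · rintro _ _ ⟨ψ, θ, rfl⟩ ⟨ψ', θ', rfl⟩
    refine ⟨ψ + ψ', θ + θ', ?_⟩
    rw [LinearMap.baseChange_add, LinearMap.add_comp]
    abel

/-- Density of `R` in its completion. -/
lemma adicCompletion_dense {R : Type} [CommRing R] [IsNoetherianRing R] (I : Ideal R) (n : ℕ)
    (s : AdicCompletion I R) : ∃ r : R, s - algebraMap R (AdicCompletion I R) r ∈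
      (I ^ n).map (algebraMap R (AdicCompletion I R)) := by
  obtain ⟨r, hr⟩ := Submodule.mkQ_surjective _ (AdicCompletion.eval I R n s)
  refine ⟨r, ?_⟩
  have h1 : s - algebraMap R (AdicCompletion I R) r ∈
      (I ^ n • ⊤ : Submodule R (AdicCompletion I R)) := by
    rw [AdicCompletion.pow_smul_top_eq_ker_eval I.fg_of_isNoetherianRing, LinearMap.mem_ker,
      map_sub, ← hr]
    exact sub_self _
  rw [Ideal.smul_top_eq_map] at h1
  exact h1

/-- An extension of `S ⊗ B` by `S ⊗ A` descends to an extension of `B` by `A`: it is the pushout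
of a presentation `0 → K → F → B → 0` along some `K → A`. -/
lemma exists_descent_extension {R S : Type} [CommRing R] [IsNoetherianRing R] [CommRing S]
    [Algebra R S] [Module.Flat R S]
    {A B M : Type} [AddCommGroup A] [Module R A]
    [AddCommGroup B] [Module R B] [Module.Finite R B]
    [AddCommGroup M] [Module S M] [Module R M] [IsScalarTower R S M]
    {m : ℕ} (π : (Fin m → R) →ₗ[R] B) (hπ : Function.Surjective π) (J : Ideal R)
    (hdense : ∀ s : S, ∃ r : R, s - algebraMap R S r ∈ J.map (algebraMap R S))
    (hJ : ∀ a ∈ J, ∃ σ : B →ₗ[R] (Fin m → R), π ∘ₗ σ = a • LinearMap.id)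
    (f : S ⊗[R] A →ₗ[S] M) (g : M →ₗ[S] S ⊗[R] B) (hf : Function.Injective f)
    (hg : Function.Surjective g) (hfg : Function.Exact f g) :
    ∃ (E : ModuleCat.{0} R) (u : A →ₗ[R] E) (v : E →ₗ[R] B),
      Function.Injective u ∧ Function.Surjective v ∧ Function.Exact u v ∧
        Nonempty (M ≃ₗ[S] S ⊗[R] E) := by
  let K := LinearMap.ker π
  let ι : K →ₗ[R] (Fin m → R) := K.subtype
  have hιπ : Function.Exact ι π := π.exact_subtype_ker_map
  obtain ⟨l, hl⟩ := Module.projective_lifting_property g (π.baseChange S) hg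
  -- On `S ⊗ K` the lift `l` of `S ⊗ F → S ⊗ B` lands in `S ⊗ A`.
  have hφ : ∃ φ : S ⊗[R] K →ₗ[S] S ⊗[R] A, f ∘ₗ φ = l ∘ₗ ι.baseChange S := by
    refine exists_comp_eq_of_exact f g hf hfg _ fun x => ?_
    rw [← LinearMap.comp_apply, ← LinearMap.comp_assoc, hl, ← LinearMap.baseChange_comp,
      hιπ.linearMap_comp_eq_zero, LinearMap.baseChange_zero]
    rfl
  obtain ⟨φ, hφ⟩ := hφ
  have := Module.finitePresentation_of_finite R K
  obtain ⟨ψ, θ, rfl⟩ := exists_descent_hom (S := S) (A := A) ι J hdense (by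
    intro a ha ψ
    obtain ⟨σ, hσ⟩ := hJ a ha
    -- `a - σ π` maps `F` into `K` and restricts to `a` on `K`.
    have hr : ∀ x, (a • LinearMap.id - σ ∘ₗ π : (Fin m → R) →ₗ[R] (Fin m → R)) x ∈ K := by
      intro x
      have := LinearMap.congr_fun hσ (π x)
      simp only [LinearMap.comp_apply, LinearMap.smul_apply, LinearMap.id_apply] at this
      simp [K, this]
    refine ⟨ψ ∘ₗ (a • LinearMap.id - σ ∘ₗ π).codRestrict K hr, ?_⟩
    ext x
    have : (a • LinearMap.id - σ ∘ₗ π).codRestrict K hr (ι x) = a • x := by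
      ext1
      simp [ι]
    simp [this]) φ
  let l' := l - f ∘ₗ θ
  have hl' : l' ∘ₗ ι.baseChange S = f ∘ₗ ψ.baseChange S := by
    rw [LinearMap.sub_comp, ← hφ, LinearMap.comp_add, LinearMap.comp_assoc]
    abel
  have hgl' : g ∘ₗ l' = π.baseChange S := by
    refine LinearMap.ext fun x => ?_
    have e1 : g (f (θ x)) = 0 := hfg.apply_apply_eq_zero _
    have e2 : g (l x) = π.baseChange S x := LinearMap.congr_fun hl x
    simp [l', e1, e2]
  let W : Submodule R (A × (Fin m → R)) := LinearMap.range (ψ.prod (-ι))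
  let E := (A × (Fin m → R)) ⧸ W
  let u : A →ₗ[R] E := W.mkQ ∘ₗ LinearMap.inl R A (Fin m → R)
  let v : E →ₗ[R] B := W.liftQ (π ∘ₗ LinearMap.snd R A (Fin m → R)) (by
    rintro _ ⟨k, rfl⟩
    simp [ι, K])
  have hu : Function.Injective u := by
    rw [← LinearMap.ker_eq_bot, LinearMap.ker_eq_bot']
    intro a ha
    obtain ⟨k, hk⟩ := (Submodule.Quotient.mk_eq_zero W).1 ha
    have h1 : ψ k = a := congrArg Prod.fst hk
    have h2 : -(ι k) = 0 := congrArg Prod.snd hk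
    have h3 : k = 0 := Subtype.ext (neg_eq_zero.1 h2)
    rw [← h1, h3, map_zero]
  have hv : Function.Surjective v := by
    intro b
    obtain ⟨x, rfl⟩ := hπ b
    exact ⟨W.mkQ (0, x), rfl⟩
  have huv : Function.Exact u v := by
    intro e
    constructor
    · obtain ⟨⟨a, x⟩, rfl⟩ := W.mkQ_surjective e
      intro hx
      have hx : π x = 0 := hx
      refine ⟨a + ψ ⟨x, hx⟩, ?_⟩
      refine (Submodule.Quotient.eq W).2 ⟨⟨x, hx⟩, ?_⟩
      simp [ι]
    · rintro ⟨a, rfl⟩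
      change π 0 = 0
      simp
  let h₀ : E →ₗ[R] M := W.liftQ
    (LinearMap.coprod (f.restrictScalars R ∘ₗ TensorProduct.mk R S A 1)
      (l'.restrictScalars R ∘ₗ TensorProduct.mk R S (Fin m → R) 1)) (by
    rintro _ ⟨k, rfl⟩
    have : l' (1 ⊗ₜ ι k) = f (1 ⊗ₜ ψ k) := LinearMap.congr_fun hl' (1 ⊗ₜ k)
    change f (1 ⊗ₜ ψ k) + l' (1 ⊗ₜ (-ι k)) = 0
    rw [TensorProduct.tmul_neg, map_neg, this, add_neg_cancel])
  have hh₀ : ∀ a x, h₀ (W.mkQ (a, x)) = f (1 ⊗ₜ a) + l' (1 ⊗ₜ x) := fun _ _ => rfl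
  let h : S ⊗[R] E →ₗ[S] M := h₀.liftBaseChange S
  have c1 : h ∘ₗ u.baseChange S = f := by
    ext a
    simp [h, u, hh₀]
  have c2 : g ∘ₗ h = v.baseChange S := by
    refine TensorProduct.AlgebraTensorModule.ext fun s e => ?_
    obtain ⟨⟨a, x⟩, rfl⟩ := W.mkQ_surjective e
    have e1 : g (f (1 ⊗ₜ a)) = 0 := hfg.apply_apply_eq_zero _
    have e2 : g (l' (1 ⊗ₜ x)) = 1 ⊗ₜ π x := LinearMap.congr_fun hgl' (1 ⊗ₜ x)
    have e3 : v (W.mkQ (a, x)) = π x := rfl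
    rw [LinearMap.comp_apply, LinearMap.liftBaseChange_tmul, hh₀, map_smul, map_add, e1, e2,
      zero_add, LinearMap.baseChange_tmul, e3, TensorProduct.smul_tmul', smul_eq_mul, mul_one]
  have exS : Function.Exact (u.baseChange S) (v.baseChange S) := lTensor_exact S huv hv
  have hbij : Function.Bijective h := by
    refine LinearMap.bijective_of_surjective_of_bijective_of_bijective_of_injective
      (0 : Unit →ₗ[S] S ⊗[R] A) (u.baseChange S) (v.baseChange S) (0 : S ⊗[R] B →ₗ[S] Unit)
      (0 : Unit →ₗ[S] S ⊗[R] A) f g (0 : S ⊗[R] B →ₗ[S] Unit)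
      LinearMap.id LinearMap.id h LinearMap.id LinearMap.id
      (by simp) (by simp [c1]) (by simp [c2]) (by simp) ?_ exS ?_ ?_ hfg ?_
      Function.surjective_id Function.bijective_id Function.bijective_id Function.injective_id
    · rw [LinearMap.exact_zero_iff_injective]
      exact Module.Flat.lTensor_preserves_injective_linearMap u hu
    · rw [LinearMap.exact_zero_iff_surjective]
      exact LinearMap.lTensor_surjective S hv
    · rwa [LinearMap.exact_zero_iff_injective]
    · rwa [LinearMap.exact_zero_iff_surjective]
  exact ⟨ModuleCat.of R E, u, v, hu, hv, huv, ⟨(LinearEquiv.ofBijective h hbij).symm⟩⟩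

/-! ### Summands of base changes -/

/-- `N` is a direct summand of the base change `S ⊗ X` of a single `X ∈ 𝒳`. -/
def IsSummandBaseChange {R : Type} [CommRing R] (𝒳 : Set (ModuleCat.{0} R))
    (S : Type) [CommRing S] [Algebra R S] (N : Type) [AddCommGroup N] [Module S N] : Prop :=
  ∃ X ∈ 𝒳, ∃ (s : N →ₗ[S] S ⊗[R] X) (r : S ⊗[R] X →ₗ[S] N), r ∘ₗ s = LinearMap.id

lemma IsResolving.pi_mem {R : Type} [CommRing R] {𝒳 : Set (ModuleCat.{0} R)}
    (h𝒳 : IsResolving R 𝒳) : ∀ (n : ℕ) (X : Fin n → ModuleCat.{0} R), (∀ i, X i ∈ 𝒳) →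
      ModuleCat.of R ((i : Fin n) → X i) ∈ 𝒳
  | 0, X, _ => h𝒳.summand_mem (ModuleCat.of R R) _
      ⟨0, 0, LinearMap.ext fun _ => Subsingleton.elim _ _⟩ h𝒳.ring_mem
  | n + 1, X, hX => by
    have ih := h𝒳.pi_mem n (fun i => X i.succ) (fun i => hX _)
    have h1 : ModuleCat.of R (X 0 × ((i : Fin n) → X i.succ)) ∈ 𝒳 :=
      h𝒳.extension_mem (X 0) _ (ModuleCat.of R ((i : Fin n) → X i.succ))
        (LinearMap.inl R _ _) (LinearMap.snd R _ _) LinearMap.inl_injective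
        LinearMap.snd_surjective Function.Exact.inl_snd (hX 0) ih
    exact h𝒳.mem_of_iso _ _ ⟨Fin.consLinearEquiv R (fun i => X i)⟩ h1

lemma memAdd_iff_isSummandBaseChange {R : Type} [CommRing R] {𝒳 : Set (ModuleCat.{0} R)}
    (h𝒳 : IsResolving R 𝒳) (S : Type) [CommRing S] [Algebra R S]
    (N : Type) [AddCommGroup N] [Module S N] :
    memAdd S {Y : ModuleCat.{0} S | ∃ X ∈ 𝒳, Nonempty (Y ≃ₗ[S] (S ⊗[R] ↥X))} N ↔
      IsSummandBaseChange 𝒳 S N := by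
  constructor
  · rintro ⟨n, Y, hY, s, r, hrs⟩
    choose X hX e using hY
    let E : S ⊗[R] ((i : Fin n) → X i) ≃ₗ[S] ((i : Fin n) → Y i) :=
      (TensorProduct.piRight R S S (fun i => X i)) ≪≫ₗ
        LinearEquiv.piCongrRight (fun i => (e i).some.symm)
    refine ⟨_, h𝒳.pi_mem n X hX, E.symm.toLinearMap ∘ₗ s, r ∘ₗ E.toLinearMap, ?_⟩
    refine LinearMap.ext fun x => ?_
    have := LinearMap.congr_fun hrs x
    simpa using this
  · rintro ⟨X, hX, s, r, hrs⟩
    refine ⟨1, fun _ => ModuleCat.of S (S ⊗[R] X), fun _ => ⟨X, hX, ⟨LinearEquiv.refl _ _⟩⟩,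
      LinearMap.pi (fun _ => s), r ∘ₗ LinearMap.proj 0, ?_⟩
    exact hrs

lemma IsSummandBaseChange.summand {R : Type} [CommRing R] {𝒳 : Set (ModuleCat.{0} R)}
    {S : Type} [CommRing S] [Algebra R S] {M N : Type} [AddCommGroup M] [Module S M]
    [AddCommGroup N] [Module S N] (hM : IsSummandBaseChange 𝒳 S M)
    (i : N →ₗ[S] M) (p : M →ₗ[S] N) (hpi : p ∘ₗ i = LinearMap.id) :
    IsSummandBaseChange 𝒳 S N := by
  obtain ⟨X, hX, s, r, hrs⟩ := hM
  refine ⟨X, hX, s ∘ₗ i, p ∘ₗ r, ?_⟩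
  rw [LinearMap.comp_assoc, ← LinearMap.comp_assoc i s r, hrs, LinearMap.id_comp, hpi]

/-- Every extension of `S ⊗ B` by `S ⊗ A`, for `A, B ∈ 𝒳`, is the base change of some
module in `𝒳`. -/
def ExtensionsDescend {R : Type} [CommRing R] (𝒳 : Set (ModuleCat.{0} R))
    (S : Type) [CommRing S] [Algebra R S] : Prop :=
  ∀ A ∈ 𝒳, ∀ B ∈ 𝒳, ∀ (M : Type) [AddCommGroup M] [Module S M]
    (f : S ⊗[R] A →ₗ[S] M) (g : M →ₗ[S] S ⊗[R] B), Function.Injective f →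
      Function.Surjective g → Function.Exact f g →
        ∃ E ∈ 𝒳, Nonempty (M ≃ₗ[S] S ⊗[R] E)

/-- Adding the complements of `L` in `S ⊗ A` and of `N` in `S ⊗ B` to an extension of `N` by `L`
yields an extension of `S ⊗ B` by `S ⊗ A`. -/
lemma ExtensionsDescend.extension {R : Type} [CommRing R] {𝒳 : Set (ModuleCat.{0} R)}
    {S : Type} [CommRing S] [Algebra R S] (hS : ExtensionsDescend 𝒳 S)
    {L M N : Type} [AddCommGroup L] [Module S L] [AddCommGroup M] [Module S M]
    [AddCommGroup N] [Module S N] (f : L →ₗ[S] M) (g : M →ₗ[S] N)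
    (hf : Function.Injective f) (hg : Function.Surjective g) (hfg : Function.Exact f g)
    (hL : IsSummandBaseChange 𝒳 S L) (hN : IsSummandBaseChange 𝒳 S N) :
    IsSummandBaseChange 𝒳 S M := by
  obtain ⟨A, hA, i, p, hpi⟩ := hL
  obtain ⟨B, hB, j, q, hqj⟩ := hN
  have hpi' : ∀ x, p (i x) = x := LinearMap.congr_fun hpi
  have hqj' : ∀ x, q (j x) = x := LinearMap.congr_fun hqj
  let P := LinearMap.ker p
  let Q := LinearMap.ker q
  let c : S ⊗[R] A →ₗ[S] P := (LinearMap.id - i ∘ₗ p).codRestrict P (by simp [P, hpi'])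
  have hc : ∀ a, (c a : S ⊗[R] A) = a - i (p a) := fun _ => rfl
  let F : S ⊗[R] A →ₗ[S] M × P × Q := (f ∘ₗ p).prod (c.prod 0)
  let G : M × P × Q →ₗ[S] S ⊗[R] B :=
    (j ∘ₗ g).coprod (Q.subtype ∘ₗ LinearMap.snd S P Q)
  have hF : ∀ a, F a = (f (p a), c a, 0) := fun _ => rfl
  have hG : ∀ m u v, G (m, u, v) = j (g m) + v := fun _ _ _ => rfl
  have hPmem : ∀ u : P, p u = 0 := fun u => u.2
  have hQmem : ∀ u : Q, q u = 0 := fun u => u.2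
  obtain ⟨E, hE, ⟨e⟩⟩ := hS A hA B hB (M × P × Q) F G
    (by
      rw [injective_iff_map_eq_zero]
      intro a ha
      rw [hF, Prod.mk_eq_zero, Prod.mk_eq_zero] at ha
      have h1 : p a = 0 := (map_eq_zero_iff f hf).1 ha.1
      have h2 := congrArg Subtype.val ha.2.1
      rw [hc, h1] at h2
      simpa using h2)
    (by
      intro b
      obtain ⟨m, hm⟩ := hg (q b)
      refine ⟨(m, 0, ⟨b - j (q b), ?_⟩), ?_⟩
      · simp [Q, hqj']
      · rw [hG, hm]
        simp)
    (by
      rintro ⟨m, u, v⟩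
      constructor
      · intro h
        rw [hG] at h
        have h1 : g m = 0 := by simpa [hqj', hQmem] using congrArg q h
        have h2 : v = 0 := by
          ext1
          simpa [h1] using h
        obtain ⟨l, rfl⟩ := (hfg m).1 h1
        have h3 : p (i l + u) = l := by rw [map_add, hpi', hPmem, add_zero]
        refine ⟨i l + u, ?_⟩
        rw [hF, h2, h3]
        refine Prod.ext rfl (Prod.ext (Subtype.ext ?_) rfl)
        change (c (i l + u) : S ⊗[R] A) = u
        rw [hc, h3]
        abel
      · rintro ⟨a, ha⟩
        rw [← ha, hF, hG, hfg.apply_apply_eq_zero]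
        simp)
  have hM3 : IsSummandBaseChange 𝒳 S (M × P × Q) :=
    ⟨E, hE, e.toLinearMap, e.symm.toLinearMap, by ext1 <;> simp⟩
  exact hM3.summand (LinearMap.inl S _ _) (LinearMap.fst S _ _) (LinearMap.fst_comp_inl ..)

/-- Lifting a free cover `S ⊗ F → N` to `t : S ⊗ F → M` exhibits `L × (S ⊗ F)` as an extension of
`M` by the kernel `Q` of the cover. If `N` is a summand of `S ⊗ B` with complement `N'` and the
cover is induced by `F → B` with kernel `K`, then `Q` is an extension of `N'` by `S ⊗ K`. -/
lemma ExtensionsDescend.ker_epi {R : Type} [CommRing R] {𝒳 : Set (ModuleCat.{0} R)}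
    (h𝒳 : IsResolving R 𝒳) {S : Type} [CommRing S] [Algebra R S] [Module.Flat R S]
    (hS : ExtensionsDescend 𝒳 S)
    {L M N : Type} [AddCommGroup L] [Module S L] [AddCommGroup M] [Module S M]
    [AddCommGroup N] [Module S N] (f : L →ₗ[S] M) (g : M →ₗ[S] N)
    (hf : Function.Injective f) (hg : Function.Surjective g) (hfg : Function.Exact f g)
    (hM : IsSummandBaseChange 𝒳 S M) (hN : IsSummandBaseChange 𝒳 S N) :
    IsSummandBaseChange 𝒳 S L := by
  obtain ⟨B, hB, s, r, hrs⟩ := hN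
  have hrs' : ∀ x, r (s x) = x := LinearMap.congr_fun hrs
  have := h𝒳.fg B hB
  obtain ⟨m, π, hπ⟩ := Module.Finite.exists_fin' R B
  let ι : LinearMap.ker π →ₗ[R] (Fin m → R) := (LinearMap.ker π).subtype
  have hιπ : Function.Exact ι π := π.exact_subtype_ker_map
  have hK : ModuleCat.of R (LinearMap.ker π) ∈ 𝒳 :=
    h𝒳.ker_epi_mem _ (ModuleCat.of R (Fin m → R)) B ι π Subtype.val_injective hπ hιπ
      (h𝒳.pi_mem m (fun _ => ModuleCat.of R R) (fun _ => h𝒳.ring_mem)) hB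
  let ιS := ι.baseChange S
  let πS := π.baseChange S
  have hιS : Function.Injective ιS :=
    Module.Flat.lTensor_preserves_injective_linearMap ι Subtype.val_injective
  have hπS : Function.Surjective πS := LinearMap.lTensor_surjective S hπ
  have hιπS : Function.Exact ιS πS := lTensor_exact S hιπ hπ
  let Q := LinearMap.ker (r ∘ₗ πS)
  have hr : IsSummandBaseChange 𝒳 S (LinearMap.ker r) := by
    refine ⟨B, hB, (LinearMap.ker r).subtype,
      (LinearMap.id - s ∘ₗ r).codRestrict (LinearMap.ker r) (by simp [hrs']), ?_⟩
    refine LinearMap.ext fun x => Subtype.ext ?_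
    have hx : r x = 0 := x.2
    simp [hx]
  have hKS : IsSummandBaseChange 𝒳 S (S ⊗[R] LinearMap.ker π) :=
    ⟨_, hK, LinearMap.id, LinearMap.id, rfl⟩
  have hQ : IsSummandBaseChange 𝒳 S Q := by
    let a : S ⊗[R] LinearMap.ker π →ₗ[S] Q := ιS.codRestrict Q (fun x => by
      have : πS (ιS x) = 0 := hιπS.apply_apply_eq_zero x
      simp [Q, this])
    let b : Q →ₗ[S] LinearMap.ker r := (πS ∘ₗ Q.subtype).codRestrict _ (fun x => x.2)
    refine hS.extension a b ?_ ?_ ?_ hKS hr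
    · intro x y hxy
      exact hιS (congrArg Subtype.val hxy)
    · rintro ⟨y, hy⟩
      obtain ⟨x, rfl⟩ := hπS y
      exact ⟨⟨x, hy⟩, rfl⟩
    · intro x
      constructor
      · intro hx
        obtain ⟨k, hk⟩ := (hιπS x).1 (congrArg Subtype.val hx)
        exact ⟨k, Subtype.ext hk⟩
      · rintro ⟨k, rfl⟩
        exact Subtype.ext (hιπS.apply_apply_eq_zero k)
  obtain ⟨t, ht⟩ := Module.projective_lifting_property g (r ∘ₗ πS) hg
  have ht' : ∀ x, g (t x) = r (πS x) := LinearMap.congr_fun ht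
  obtain ⟨k, hk⟩ := exists_comp_eq_of_exact (Q := Q) f g hf hfg (t ∘ₗ Q.subtype) (fun x => by
    rw [LinearMap.comp_apply, ht']
    exact x.2)
  have hk' : ∀ x : Q, f (k x) = t x := LinearMap.congr_fun hk
  have hLF : IsSummandBaseChange 𝒳 S (L × (S ⊗[R] (Fin m → R))) := by
    refine hS.extension ((-k).prod Q.subtype) (f.coprod t) ?_ ?_ ?_ hQ hM
    · intro x y hxy
      exact Subtype.ext (congrArg Prod.snd hxy)
    · intro y
      obtain ⟨x, hx⟩ := hπS (s (g y))
      have h0 : g (y - t x) = 0 := by rw [map_sub, ht', hx, hrs', sub_self]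
      obtain ⟨l, hl⟩ := (hfg _).1 h0
      exact ⟨(l, x), by simp [hl]⟩
    · rintro ⟨l, x⟩
      constructor
      · intro h
        have h : f l + t x = 0 := h
        have hx : r (πS x) = 0 := by
          simpa [hfg.apply_apply_eq_zero, ht'] using congrArg g h
        refine ⟨⟨x, hx⟩, Prod.ext ?_ rfl⟩
        apply hf
        change f (-k ⟨x, hx⟩) = f l
        rw [map_neg, hk']
        exact (eq_neg_of_add_eq_zero_left h).symm
      · rintro ⟨y, hy⟩
        rw [← hy]
        change f (-k y) + t y = 0
        rw [map_neg, hk', neg_add_cancel]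
  exact hLF.summand (LinearMap.inl S _ _) (LinearMap.fst S _ _) (LinearMap.fst_comp_inl ..)

lemma extensionsDescend_adicCompletion {R : Type} [CommRing R] [IsNoetherianRing R]
    [IsLocalRing R] {𝒳 : Set (ModuleCat.{0} R)} (h𝒳 : IsResolving R 𝒳)
    (hloc : catNonfreeLocus R 𝒳 ⊆ {IsLocalRing.closedPoint R}) :
    ExtensionsDescend 𝒳 (AdicCompletion (IsLocalRing.maximalIdeal R) R) := by
  intro A hA B hB M _ _ f g hf hg hfg
  let _ : Module R M :=
    Module.compHom M (algebraMap R (AdicCompletion (IsLocalRing.maximalIdeal R) R))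
  have : IsScalarTower R (AdicCompletion (IsLocalRing.maximalIdeal R) R) M :=
    IsScalarTower.of_algebraMap_smul fun _ _ => rfl
  have := h𝒳.fg B hB
  obtain ⟨m, π, hπ⟩ := Module.Finite.exists_fin' R B
  obtain ⟨n, hn⟩ := exists_pow_factor π hπ
    ((Set.subset_biUnion_of_mem (u := fun X : ModuleCat.{0} R => nonfreeLocus R X) hB).trans hloc)
  obtain ⟨E, u, v, hu, hv, huv, he⟩ := exists_descent_extension π hπ _
    (adicCompletion_dense (IsLocalRing.maximalIdeal R) n) hn f g hf hg hfg
  exact ⟨E, h𝒳.extension_mem A E B u v hu hv huv hA hB, he⟩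

/-- Let `𝒳` be a resolving subcategory of `mod R` all of whose members are
locally free on the punctured spectrum. Then `add_{R̂} 𝒳̂` is a resolving subcategory of
`mod R̂`, where `R̂` is the `m`-adic completion and `X̂ = X ⊗_R R̂`. -/
theorem completion_add_resolving
    (R : Type) [CommRing R] [IsNoetherianRing R] [IsLocalRing R]
    (𝒳 : Set (ModuleCat.{0} R)) (h𝒳 : IsResolving R 𝒳)
    (hloc : catNonfreeLocus R 𝒳 ⊆ {IsLocalRing.closedPoint R}) :
    IsResolving (AdicCompletion (IsLocalRing.maximalIdeal R) R)
      {N : ModuleCat.{0} (AdicCompletion (IsLocalRing.maximalIdeal R) R) |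
        memAdd (AdicCompletion (IsLocalRing.maximalIdeal R) R)
          {Y : ModuleCat.{0} (AdicCompletion (IsLocalRing.maximalIdeal R) R) |
            ∃ X ∈ 𝒳, Nonempty (Y ≃ₗ[AdicCompletion (IsLocalRing.maximalIdeal R) R]
              (AdicCompletion (IsLocalRing.maximalIdeal R) R ⊗[R] ↥X))} N} := by
  have hS := extensionsDescend_adicCompletion h𝒳 hloc
  simp only [memAdd_iff_isSummandBaseChange h𝒳]
  refine ⟨?_, ?_, ?_, ?_, ?_, ?_⟩
  · rintro M ⟨X, hX, s, r, hrs⟩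
    have := h𝒳.fg X hX
    exact Module.Finite.of_surjective r fun x => ⟨s x, LinearMap.congr_fun hrs x⟩
  · rintro M N ⟨e⟩ hM
    exact hM.summand e.symm.toLinearMap e.toLinearMap (LinearMap.ext fun x => by simp)
  · refine ⟨ModuleCat.of R R, h𝒳.ring_mem, ?_⟩
    let e := TensorProduct.AlgebraTensorModule.rid R
      (AdicCompletion (IsLocalRing.maximalIdeal R) R)
      (AdicCompletion (IsLocalRing.maximalIdeal R) R)
    exact ⟨e.symm.toLinearMap, e.toLinearMap, LinearMap.ext fun x => e.apply_symm_apply x⟩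
  · rintro M N ⟨i, p, hpi⟩ hM
    exact hM.summand i p hpi
  · exact fun L M N f g hf hg hfg hL hN => hS.extension f g hf hg hfg hL hN
  · exact fun L M N f g hf hg hfg hM hN => hS.ker_epi h𝒳 f g hf hg hfg hM hN

end
end
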